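/- arXiv:2504.12566 — 6 statements merged into one kernel-verified Lean document; each statement's English description precedes it below -/
import Mathlib

section
/- Every automorphism of the monoid P_fin(ℤ) is of the form ε·f_α or ε·g_α for some integer α and some sign ε ∈ {+1, −1}; and conversely, for every integer α and every sign ε, the maps ε·f_α and ε·g_α are automorphisms of P_fin(ℤ). Here f_α(X) := X + α·min X − α·max X, g_α(X) := X + (α−1)·min X − (α+1)·max X, and (−F)(X) := −F(X) denotes the pointwise negation of the output. -/
open Finset Pointwise

/-- Nonempty finite subsets of ℤ. -/
abbrev NFin : Type := {X : Finset ℤ // X.Nonempty}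

/-- Sumset operation on nonempty finite subsets of ℤ. -/
instance : Add NFin := ⟨fun X Y => ⟨X.1 + Y.1, X.2.add Y.2⟩⟩

/-- Minimum of a nonempty finite subset of ℤ. -/
def minz (X : NFin) : ℤ := X.1.min' X.2

/-- Maximum of a nonempty finite subset of ℤ. -/
def maxz (X : NFin) : ℤ := X.1.max' X.2

/-- Translate `X + c`. -/
def tr (X : NFin) (c : ℤ) : NFin := ⟨X.1.image (· + c), X.2.image _⟩

/-- `f_α(X) = X + α·min X − α·max X`. -/
def fa (α : ℤ) (X : NFin) : NFin := tr X (α * minz X - α * maxz X)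

/-- `g_α(X) = X + (α−1)·min X − (α+1)·max X`. -/
def ga (α : ℤ) (X : NFin) : NFin := tr X ((α - 1) * minz X - (α + 1) * maxz X)

/-- Pointwise negation `X ↦ −X`. -/
def negF (X : NFin) : NFin := ⟨-X.1, X.2.neg⟩

/-! A set `X` of diameter `n` satisfies `X + {0, …, n} = {min X, …, max X} + {0, …, n}`, so a
homomorphism from `P_fin(ℤ)` to a cancellative monoid is determined by its values at `{1}` and
`{0, 1}`. Applied to the minimum and the diameter of the image, this shows that an automorphism
preserves diameters and that, after composition with a suitable `±f_β`, it fixes all minima and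
maxima, hence all intervals.

Such an automorphism respects the property of `X + B` being an interval. Taking intervals for `B`
shows that the length of the longest gap is preserved, and taking all `B` shows that inclusion
between sets with the same extrema is preserved. Hence each triple `{p, a, q}` is mapped to itself
or to its reflection `{p, p + q - a, q}`. The choice does not depend on the triple, and a set is
determined by the triples it contains, so the automorphism is the identity or the reflection
`X ↦ min X + max X - X`, which is `-g_0`. -/

namespace NFin

/-- The neutral element `{0}` of `P_fin(ℤ)`. -/
instance : Zero NFin := ⟨⟨0, zero_nonempty⟩⟩

/-- The monoid structure of `P_fin(ℤ)`. -/
instance : AddCommMonoid NFin where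
  zero_add X := Subtype.ext (zero_add X.1)
  add_zero X := Subtype.ext (add_zero X.1)
  add_assoc X Y Z := Subtype.ext (add_assoc X.1 Y.1 Z.1)
  add_comm X Y := Subtype.ext (add_comm X.1 Y.1)
  nsmul := nsmulRec

theorem ext_mem {X Y : NFin} (h : ∀ z, z ∈ X.1 ↔ z ∈ Y.1) : X = Y :=
  Subtype.ext (Finset.ext h)

theorem mem_add {X Y : NFin} {z : ℤ} : z ∈ (X + Y).1 ↔ ∃ x ∈ X.1, ∃ y ∈ Y.1, x + y = z :=
  Finset.mem_add

theorem mem_negF {X : NFin} {z : ℤ} : z ∈ (negF X).1 ↔ -z ∈ X.1 := by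
  simp [negF]

/-! ### Minimum and maximum -/

theorem minz_mem (X : NFin) : minz X ∈ X.1 := min'_mem _ _

theorem maxz_mem (X : NFin) : maxz X ∈ X.1 := max'_mem _ _

theorem minz_le {X : NFin} {x : ℤ} (h : x ∈ X.1) : minz X ≤ x := min'_le _ _ h

theorem le_maxz {X : NFin} {x : ℤ} (h : x ∈ X.1) : x ≤ maxz X := le_max' _ _ h

theorem minz_le_maxz (X : NFin) : minz X ≤ maxz X := minz_le (maxz_mem X)

theorem minz_eq {X : NFin} {p : ℤ} (hp : p ∈ X.1) (h : ∀ x ∈ X.1, p ≤ x) : minz X = p :=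
  le_antisymm (minz_le hp) (h _ (minz_mem X))

theorem maxz_eq {X : NFin} {q : ℤ} (hq : q ∈ X.1) (h : ∀ x ∈ X.1, x ≤ q) : maxz X = q :=
  le_antisymm (h _ (maxz_mem X)) (le_maxz hq)

theorem minz_add (X Y : NFin) : minz (X + Y) = minz X + minz Y := by
  refine minz_eq (mem_add.2 ⟨_, minz_mem X, _, minz_mem Y, rfl⟩) fun z hz => ?_
  obtain ⟨x, hx, y, hy, rfl⟩ := mem_add.1 hz
  exact add_le_add (minz_le hx) (minz_le hy)

theorem maxz_add (X Y : NFin) : maxz (X + Y) = maxz X + maxz Y := by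
  refine maxz_eq (mem_add.2 ⟨_, maxz_mem X, _, maxz_mem Y, rfl⟩) fun z hz => ?_
  obtain ⟨x, hx, y, hy, rfl⟩ := mem_add.1 hz
  exact add_le_add (le_maxz hx) (le_maxz hy)

theorem minz_negF (X : NFin) : minz (negF X) = -maxz X :=
  minz_eq (mem_negF.2 (by simpa using maxz_mem X)) fun _ hx => neg_le.1 (le_maxz (mem_negF.1 hx))

theorem maxz_negF (X : NFin) : maxz (negF X) = -minz X :=
  maxz_eq (mem_negF.2 (by simpa using minz_mem X)) fun _ hx => le_neg.1 (minz_le (mem_negF.1 hx))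

/-- `minz` as a homomorphism. -/
def minzHom : NFin →+ ℤ := AddMonoidHom.mk' minz minz_add

/-- `maxz` as a homomorphism. -/
def maxzHom : NFin →+ ℤ := AddMonoidHom.mk' maxz maxz_add

/-- The diameter `X ↦ max X - min X`, as a homomorphism. -/
def diamHom : NFin →+ ℤ := maxzHom - minzHom

theorem diamHom_apply (X : NFin) : diamHom X = maxz X - minz X := rfl

theorem diamHom_nonneg (X : NFin) : 0 ≤ diamHom X := sub_nonneg.2 (minz_le_maxz X)

/-- `X` has minimum `p` and maximum `q`. -/
structure HasExtrema (p q : ℤ) (X : NFin) : Prop where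
  min_mem : p ∈ X.1
  max_mem : q ∈ X.1
  min_le : ∀ x ∈ X.1, p ≤ x
  le_max : ∀ x ∈ X.1, x ≤ q

theorem hasExtrema_minz_maxz (X : NFin) : HasExtrema (minz X) (maxz X) X :=
  ⟨minz_mem X, maxz_mem X, fun _ => minz_le, fun _ => le_maxz⟩

namespace HasExtrema

variable {p q p' q' : ℤ} {X Y : NFin}

theorem minz_eq (hX : HasExtrema p q X) : minz X = p := NFin.minz_eq hX.min_mem hX.min_le

theorem maxz_eq (hX : HasExtrema p q X) : maxz X = q := NFin.maxz_eq hX.max_mem hX.le_max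

theorem add (hX : HasExtrema p q X) (hY : HasExtrema p' q' Y) :
    HasExtrema (p + p') (q + q') (X + Y) := by
  simpa only [minz_add, maxz_add, hX.minz_eq, hX.maxz_eq, hY.minz_eq, hY.maxz_eq] using
    hasExtrema_minz_maxz (X + Y)

theorem ordConnected_iff (hX : HasExtrema p q X) :
    (X.1 : Set ℤ).OrdConnected ↔ ∀ z, p ≤ z → z ≤ q → z ∈ X.1 :=
  ⟨fun h _ h₁ h₂ => h.out hX.min_mem hX.max_mem ⟨h₁, h₂⟩, fun h =>
    ⟨fun _ hx _ hy z hz => h z ((hX.min_le _ hx).trans hz.1) (hz.2.trans (hX.le_max _ hy))⟩⟩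

theorem eq_of_ordConnected (hX : HasExtrema p q X) (hY : HasExtrema p q Y)
    (hXc : (X.1 : Set ℤ).OrdConnected) (hYc : (Y.1 : Set ℤ).OrdConnected) : X = Y := by
  rw [hX.ordConnected_iff] at hXc
  rw [hY.ordConnected_iff] at hYc
  exact ext_mem fun z => ⟨fun hz => hYc z (hX.min_le z hz) (hX.le_max z hz),
    fun hz => hXc z (hY.min_le z hz) (hY.le_max z hz)⟩

theorem ordConnected_of_le_add_one (hX : HasExtrema p q X) (hpq : q ≤ p + 1) :
    (X.1 : Set ℤ).OrdConnected := by
  refine hX.ordConnected_iff.2 fun z h₁ h₂ => ?_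
  rcases (by omega : z = p ∨ z = q) with rfl | rfl
  exacts [hX.min_mem, hX.max_mem]

end HasExtrema

/-! ### Singletons and translates -/

/-- The embedding `c ↦ {c}` of `ℤ` as the group of units of `P_fin(ℤ)`. -/
def singletonHom : ℤ →+ NFin where
  toFun c := ⟨{c}, singleton_nonempty c⟩
  map_zero' := rfl
  map_add' a b := Subtype.ext (singleton_add_singleton a b).symm

theorem mem_singletonHom {c z : ℤ} : z ∈ (singletonHom c).1 ↔ z = c := mem_singleton

theorem minz_singletonHom (c : ℤ) : minz (singletonHom c) = c := min'_singleton c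

theorem maxz_singletonHom (c : ℤ) : maxz (singletonHom c) = c := max'_singleton c

theorem diamHom_singletonHom (c : ℤ) : diamHom (singletonHom c) = 0 := by
  rw [diamHom_apply, maxz_singletonHom, minz_singletonHom, sub_self]

theorem tr_eq_add (X : NFin) (c : ℤ) : tr X c = X + singletonHom c :=
  Subtype.ext (add_singleton c).symm

theorem minz_tr (X : NFin) (c : ℤ) : minz (tr X c) = minz X + c := by
  rw [tr_eq_add, minz_add, minz_singletonHom]

theorem maxz_tr (X : NFin) (c : ℤ) : maxz (tr X c) = maxz X + c := by
  rw [tr_eq_add, maxz_add, maxz_singletonHom]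

theorem tr_zero (X : NFin) : tr X 0 = X := by
  rw [tr_eq_add, map_zero, add_zero]

theorem tr_tr (X : NFin) (c d : ℤ) : tr (tr X c) d = tr X (c + d) := by
  simp only [tr_eq_add, map_add, add_assoc]

theorem tr_add_tr (X Y : NFin) (c d : ℤ) : tr X c + tr Y d = tr (X + Y) (c + d) := by
  simp only [tr_eq_add, map_add, add_add_add_comm]

theorem mem_tr {X : NFin} {c z : ℤ} : z ∈ (tr X c).1 ↔ z - c ∈ X.1 := by
  simp [tr, sub_eq_add_neg]

theorem negF_tr (X : NFin) (c : ℤ) : negF (tr X c) = tr (negF X) (-c) :=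
  ext_mem fun z => by simp only [mem_negF, mem_tr, sub_neg_eq_add, neg_add']

/-! ### The maps `f_α`, `g_α` and negation as automorphisms -/

theorem negF_involutive : Function.Involutive negF := fun X => Subtype.ext (neg_neg X.1)

theorem negF_add (X Y : NFin) : negF (X + Y) = negF X + negF Y := Subtype.ext (neg_add X.1 Y.1)

theorem fa_add (α : ℤ) (X Y : NFin) : fa α (X + Y) = fa α X + fa α Y := by
  simp only [fa, tr_add_tr, minz_add, maxz_add]
  congr 1
  ring

theorem ga_add (α : ℤ) (X Y : NFin) : ga α (X + Y) = ga α X + ga α Y := by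
  simp only [ga, tr_add_tr, minz_add, maxz_add]
  congr 1
  ring

theorem fa_neg_fa (α : ℤ) (X : NFin) : fa (-α) (fa α X) = X := by
  simp only [fa, tr_tr, minz_tr, maxz_tr]
  conv_rhs => rw [← tr_zero X]
  congr 1
  ring

theorem ga_involutive (α : ℤ) : Function.Involutive (ga α) := fun X => by
  simp only [ga, tr_tr, minz_tr, maxz_tr]
  conv_rhs => rw [← tr_zero X]
  congr 1
  ring

theorem fa_singletonHom (α c : ℤ) : fa α (singletonHom c) = singletonHom c := by
  rw [fa, minz_singletonHom, maxz_singletonHom, sub_self, tr_zero]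

theorem fa_negF_ga (α β : ℤ) (X : NFin) : fa α (negF (ga β X)) = negF (ga (β - α) X) := by
  simp only [fa, ga, negF_tr, tr_tr, minz_tr, maxz_tr, minz_negF, maxz_negF]
  congr 1
  ring

/-- Negation `X ↦ -X` as an automorphism. -/
def negEquiv : NFin ≃+ NFin where
  toEquiv := negF_involutive.toPerm
  map_add' := negF_add

/-- `f_α` as an automorphism. -/
def faEquiv (α : ℤ) : NFin ≃+ NFin where
  toFun := fa α
  invFun := fa (-α)
  left_inv := fa_neg_fa α
  right_inv X := by simpa only [neg_neg] using fa_neg_fa (-α) X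
  map_add' := fa_add α

theorem faEquiv_apply (α : ℤ) (X : NFin) : faEquiv α X = fa α X := rfl

/-- `g_α` as an automorphism. -/
def gaEquiv (α : ℤ) : NFin ≃+ NFin where
  toEquiv := (ga_involutive α).toPerm
  map_add' := ga_add α

/-- The automorphism `X ↦ min X + max X - X`, which is the one nontrivial automorphism preserving
minima and maxima. -/
def reflection : NFin ≃+ NFin := (gaEquiv 0).trans negEquiv

theorem reflection_apply (X : NFin) : reflection X = negF (ga 0 X) := rfl

theorem mem_reflection {X : NFin} {z : ℤ} :
    z ∈ (reflection X).1 ↔ minz X + maxz X - z ∈ X.1 := by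
  rw [reflection_apply, mem_negF, ga, mem_tr]
  ring_nf

theorem minz_reflection (X : NFin) : minz (reflection X) = minz X := by
  rw [reflection_apply, minz_negF, ga, maxz_tr]
  ring

theorem maxz_reflection (X : NFin) : maxz (reflection X) = maxz X := by
  rw [reflection_apply, maxz_negF, ga, minz_tr]
  ring

theorem reflection_reflection (X : NFin) : reflection (reflection X) = X :=
  ext_mem fun z => by
    rw [mem_reflection, mem_reflection, minz_reflection, maxz_reflection, sub_sub_cancel]

/-! ### Intervals -/

/-- The interval `{a, …, a + n}`. -/
noncomputable def interval (a : ℤ) (n : ℕ) : NFin := ⟨Icc a (a + n), nonempty_Icc.2 (by simp)⟩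

theorem mem_interval {a z : ℤ} {n : ℕ} : z ∈ (interval a n).1 ↔ a ≤ z ∧ z ≤ a + n := mem_Icc

theorem hasExtrema_interval (a : ℤ) (n : ℕ) : HasExtrema a (a + n) (interval a n) :=
  ⟨mem_interval.2 (by simp), mem_interval.2 (by simp), fun _ hx => (mem_interval.1 hx).1,
    fun _ hx => (mem_interval.1 hx).2⟩

theorem ordConnected_interval (a : ℤ) (n : ℕ) : ((interval a n).1 : Set ℤ).OrdConnected := by
  rw [interval, coe_Icc]
  exact Set.ordConnected_Icc

theorem eq_interval_of_ordConnected {X : NFin} (hX : (X.1 : Set ℤ).OrdConnected) :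
    X = interval (minz X) (diamHom X).toNat := by
  refine (hasExtrema_minz_maxz X).eq_of_ordConnected ?_ hX (ordConnected_interval _ _)
  convert hasExtrema_interval (minz X) (diamHom X).toNat
  rw [Int.toNat_of_nonneg (diamHom_nonneg X), diamHom_apply, add_sub_cancel]

/-- The right-hand side says that consecutive elements of `X` differ by at most `m + 1`. -/
theorem HasExtrema.ordConnected_add_interval_iff {p q : ℤ} {X : NFin} {m : ℕ}
    (hX : HasExtrema p q X) :
    ((X + interval 0 m).1 : Set ℤ).OrdConnected ↔
      ∀ z, p ≤ z → z ≤ q → ∃ x ∈ X.1, x ≤ z ∧ z ≤ x + m := by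
  simp only [(hX.add (hasExtrema_interval 0 m)).ordConnected_iff, mem_add, mem_interval]
  constructor
  · intro h z h₁ h₂
    obtain ⟨x, hx, y, hy, rfl⟩ := h z (by omega) (by omega)
    exact ⟨x, hx, by omega, by omega⟩
  · intro h z h₁ h₂
    rcases le_total z q with hz | hz
    · obtain ⟨x, hx, h₃, h₄⟩ := h z (by omega) hz
      exact ⟨x, hx, z - x, by omega, by omega⟩
    · exact ⟨q, hX.max_mem, z - q, by omega, by omega⟩

theorem HasExtrema.add_interval {p : ℤ} {n : ℕ} {X : NFin} (hX : HasExtrema p (p + n) X) :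
    X + interval 0 n = interval p n + interval 0 n := by
  have hI := hasExtrema_interval p n
  have hI₀ := hasExtrema_interval 0 n
  refine (hX.add hI₀).eq_of_ordConnected (hI.add hI₀) ?_ ?_
  · exact hX.ordConnected_add_interval_iff.2 fun z h₁ h₂ => ⟨p, hX.min_mem, h₁, h₂⟩
  · exact hI.ordConnected_add_interval_iff.2 fun z h₁ h₂ => ⟨p, hI.min_mem, h₁, h₂⟩

theorem interval_succ (a : ℤ) (n : ℕ) : interval a (n + 1) = interval a n + interval 0 1 := by
  have hI := hasExtrema_interval a n
  refine (hasExtrema_interval a (n + 1)).eq_of_ordConnected ?_ (ordConnected_interval _ _) ?_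
  · simpa [add_assoc] using hI.add (hasExtrema_interval 0 1)
  · exact hI.ordConnected_add_interval_iff.2 fun z h₁ h₂ =>
      ⟨z, mem_interval.2 ⟨h₁, h₂⟩, le_rfl, by simp⟩

theorem interval_zero_right (a : ℤ) : interval a 0 = singletonHom a :=
  ext_mem fun z => by simp [mem_interval, mem_singletonHom, le_antisymm_iff, and_comm]

theorem interval_eq_singletonHom_add (a : ℤ) (n : ℕ) :
    interval a n = singletonHom a + n • interval 0 1 := by
  induction n with
  | zero => rw [interval_zero_right, zero_nsmul, add_zero]
  | succ n ih => rw [interval_succ, ih, succ_nsmul, add_assoc]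

/-- Every set becomes an interval after adding a suitable interval, so homomorphisms into
cancellative monoids are determined by their values on intervals. -/
theorem addMonoidHom_ext {M : Type*} [AddMonoid M] [IsRightCancelAdd M] {f g : NFin →+ M}
    (hsingleton : f (singletonHom 1) = g (singletonHom 1))
    (hinterval : f (interval 0 1) = g (interval 0 1)) : f = g := by
  have eq_on_singletons : f.comp singletonHom = g.comp singletonHom :=
    AddMonoidHom.ext_int hsingleton
  have eq_on_intervals (a : ℤ) (n : ℕ) : f (interval a n) = g (interval a n) := by
    have ha : f (singletonHom a) = g (singletonHom a) := DFunLike.congr_fun eq_on_singletons a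
    rw [interval_eq_singletonHom_add, map_add, map_add, map_nsmul, map_nsmul, hinterval, ha]
  ext X
  obtain ⟨n, hn⟩ := Int.eq_ofNat_of_zero_le (diamHom_nonneg X)
  have hX : HasExtrema (minz X) (minz X + n) X := by
    convert hasExtrema_minz_maxz X
    rw [← hn, diamHom_apply, add_sub_cancel]
  refine add_right_cancel (b := f (interval 0 n)) ?_
  rw [← map_add, hX.add_interval, map_add, eq_on_intervals, eq_on_intervals, ← map_add,
    ← hX.add_interval, map_add]

/-! ### Triples and inclusion -/

/-- The set `{p, a, q}`. -/
def triple (p a q : ℤ) : NFin := ⟨{p, a, q}, insert_nonempty _ _⟩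

theorem mem_triple {p a q z : ℤ} : z ∈ (triple p a q).1 ↔ z = p ∨ z = a ∨ z = q := by
  simp [triple]

theorem hasExtrema_triple {p a q : ℤ} (hpa : p ≤ a) (haq : a ≤ q) :
    HasExtrema p q (triple p a q) := by
  constructor <;> simp only [mem_triple, true_or, or_true] <;> omega

theorem HasExtrema.triple_le_iff {p a q : ℤ} {X : NFin} (hX : HasExtrema p q X) :
    triple p a q ≤ X ↔ a ∈ X.1 := by
  refine ⟨fun h => h (mem_triple.2 (by simp)), fun ha z hz => ?_⟩
  rcases mem_triple.1 hz with rfl | rfl | rfl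
  exacts [hX.min_mem, ha, hX.max_mem]

theorem reflection_triple {p a q : ℤ} (hpa : p ≤ a) (haq : a ≤ q) :
    reflection (triple p a q) = triple p (p + q - a) q := by
  have hT := hasExtrema_triple hpa haq
  refine ext_mem fun z => ?_
  rw [mem_reflection, hT.minz_eq, hT.maxz_eq, mem_triple, mem_triple]
  omega

theorem ordConnected_triple_add_interval_iff {p a q : ℤ} {m : ℕ} (hpa : p ≤ a) (haq : a ≤ q) :
    ((triple p a q + interval 0 m).1 : Set ℤ).OrdConnected ↔ a - p ≤ m + 1 ∧ q - a ≤ m + 1 := by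
  simp only [(hasExtrema_triple hpa haq).ordConnected_add_interval_iff, mem_triple]
  constructor
  · intro h
    constructor
    · by_contra! hgap
      obtain ⟨x, hx, h₁, h₂⟩ := h (a - 1) (by omega) (by omega)
      omega
    · by_contra! hgap
      obtain ⟨x, hx, h₁, h₂⟩ := h (q - 1) (by omega) (by omega)
      omega
  · rintro ⟨h₁, h₂⟩ z hpz hzq
    rcases (by omega : z < a ∨ a ≤ z ∧ z < q ∨ z = q) with h | h | rfl
    · exact ⟨p, by omega, by omega, by omega⟩
    · exact ⟨a, by omega, by omega, by omega⟩
    · exact ⟨z, by omega, by omega, by omega⟩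

/-- A test set for membership of `k` in a set `A` with minimum `p` and maximum `q`: the sum of `A`
and `probe p q k` contains every integer between its extrema except possibly `0`, and it contains
`0` exactly when `k ∈ A`. -/
noncomputable def probe (p q k : ℤ) : NFin :=
  ⟨insert (-k) (Icc (p - 2 * q - 1) (q - 2 * p + 1) \ Icc (-q) (-p)), insert_nonempty _ _⟩

theorem mem_probe {p q k z : ℤ} : z ∈ (probe p q k).1 ↔
    z = -k ∨ (p - 2 * q - 1 ≤ z ∧ z ≤ q - 2 * p + 1) ∧ ¬(-q ≤ z ∧ z ≤ -p) := by
  simp [probe]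

theorem hasExtrema_probe {p q k : ℤ} (hpk : p ≤ k) (hkq : k ≤ q) :
    HasExtrema (p - 2 * q - 1) (q - 2 * p + 1) (probe p q k) := by
  constructor <;> simp only [mem_probe] <;> omega

theorem HasExtrema.ordConnected_add_probe_iff {A : NFin} {p q k : ℤ} (hA : HasExtrema p q A)
    (hpk : p ≤ k) (hkq : k ≤ q) :
    ((A + probe p q k).1 : Set ℤ).OrdConnected ↔ k ∈ A.1 := by
  simp only [(hA.add (hasExtrema_probe hpk hkq)).ordConnected_iff, mem_add, mem_probe]
  constructor
  · intro h
    obtain ⟨x, hx, y, hy, hxy⟩ := h 0 (by omega) (by omega)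
    have hpx := hA.min_le x hx
    have hxq := hA.le_max x hx
    rwa [show k = x by omega]
  · intro hk z h₁ h₂
    rcases (by omega : z = 0 ∨ (z < p - q ∨ 0 < z ∧ z ≤ q - p) ∨ (p - q ≤ z ∧ z < 0 ∨ q - p < z))
      with rfl | h | h
    · exact ⟨k, hk, -k, by omega, by omega⟩
    · exact ⟨p, hA.min_mem, z - p, by omega, by omega⟩
    · exact ⟨q, hA.max_mem, z - q, by omega, by omega⟩

theorem HasExtrema.le_iff_forall_ordConnected_add {p q : ℤ} {A C : NFin} (hA : HasExtrema p q A)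
    (hC : HasExtrema p q C) :
    A ≤ C ↔ ∀ B : NFin,
      ((A + B).1 : Set ℤ).OrdConnected → ((C + B).1 : Set ℤ).OrdConnected := by
  constructor
  · intro hAC B hAB
    have hB := hasExtrema_minz_maxz B
    rw [(hA.add hB).ordConnected_iff] at hAB
    exact (hC.add hB).ordConnected_iff.2 fun z h₁ h₂ => add_subset_add_right hAC (hAB z h₁ h₂)
  · intro h k hk
    have hpk := hA.min_le k hk
    have hkq := hA.le_max k hk
    exact (hC.ordConnected_add_probe_iff hpk hkq).1
      (h _ ((hA.ordConnected_add_probe_iff hpk hkq).2 hk))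

/-! ### Automorphisms preserving minima and maxima -/

/-- Automorphisms of `P_fin(ℤ)` that preserve minima and maxima. -/
structure PreservesExtrema (e : NFin ≃+ NFin) : Prop where
  minz_map : ∀ X, minz (e X) = minz X
  maxz_map : ∀ X, maxz (e X) = maxz X

namespace PreservesExtrema

variable {e : NFin ≃+ NFin} {p a b q : ℤ} {A C X : NFin}

theorem symm (he : PreservesExtrema e) : PreservesExtrema e.symm where
  minz_map X := by rw [← he.minz_map, e.apply_symm_apply]
  maxz_map X := by rw [← he.maxz_map, e.apply_symm_apply]

theorem trans_reflection (he : PreservesExtrema e) : PreservesExtrema (e.trans reflection) where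
  minz_map X := (minz_reflection _).trans (he.minz_map X)
  maxz_map X := (maxz_reflection _).trans (he.maxz_map X)

theorem hasExtrema_map (he : PreservesExtrema e) (hX : HasExtrema p q X) :
    HasExtrema p q (e X) := by
  simpa only [he.minz_map, he.maxz_map, hX.minz_eq, hX.maxz_eq] using hasExtrema_minz_maxz (e X)

theorem map_eq_self_of_le_add_one (he : PreservesExtrema e) (hX : HasExtrema p q X)
    (hpq : q ≤ p + 1) : e X = X :=
  have heX := he.hasExtrema_map hX
  heX.eq_of_ordConnected hX (heX.ordConnected_of_le_add_one hpq) (hX.ordConnected_of_le_add_one hpq)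

theorem map_interval (he : PreservesExtrema e) (a : ℤ) (n : ℕ) :
    e (interval a n) = interval a n := by
  have map_singleton : e (singletonHom a) = singletonHom a :=
    interval_zero_right a ▸ he.map_eq_self_of_le_add_one (hasExtrema_interval a 0) (by simp)
  have map_interval_one : e (interval 0 1) = interval 0 1 :=
    he.map_eq_self_of_le_add_one (hasExtrema_interval 0 1) (by simp)
  rw [interval_eq_singletonHom_add, map_add, map_nsmul, map_singleton, map_interval_one]

theorem ordConnected_map (he : PreservesExtrema e) (hX : (X.1 : Set ℤ).OrdConnected) :
    ((e X).1 : Set ℤ).OrdConnected := by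
  rw [eq_interval_of_ordConnected hX, he.map_interval]
  exact ordConnected_interval _ _

theorem ordConnected_map_iff (he : PreservesExtrema e) :
    ((e X).1 : Set ℤ).OrdConnected ↔ (X.1 : Set ℤ).OrdConnected :=
  ⟨fun h => e.symm_apply_apply X ▸ he.symm.ordConnected_map h, he.ordConnected_map⟩

theorem ordConnected_map_add_interval_iff (he : PreservesExtrema e) {m : ℕ} :
    ((e X + interval 0 m).1 : Set ℤ).OrdConnected ↔
      ((X + interval 0 m).1 : Set ℤ).OrdConnected := by
  rw [← he.ordConnected_map_iff (X := X + interval 0 m), map_add, he.map_interval]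

theorem map_le_map_iff (he : PreservesExtrema e) (hA : HasExtrema p q A) (hC : HasExtrema p q C) :
    e A ≤ e C ↔ A ≤ C := by
  rw [hA.le_iff_forall_ordConnected_add hC, (he.hasExtrema_map hA).le_iff_forall_ordConnected_add
    (he.hasExtrema_map hC), e.surjective.forall]
  simp only [← map_add, he.ordConnected_map_iff]

/-- Among the sets with minimum `p` and maximum `q`, `X` is the least upper bound of the triples it
contains, and `e` preserves inclusion. -/
theorem exists_mem_map_triple (he : PreservesExtrema e) (hX : HasExtrema p q X)
    (hb : b ∈ (e X).1) : ∃ a ∈ X.1, b ∈ (e (triple p a q)).1 := by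
  by_contra! hnot
  have hT {a : ℤ} (ha : a ∈ X.1) := hasExtrema_triple (hX.min_le a ha) (hX.le_max a ha)
  have hT₀ := he.hasExtrema_map (hT hX.min_mem)
  have heX := he.hasExtrema_map hX
  have min_ne : p ≠ b := fun h => hnot p hX.min_mem (h ▸ hT₀.min_mem)
  have max_ne : q ≠ b := fun h => hnot p hX.min_mem (h ▸ hT₀.max_mem)
  let Y : NFin := ⟨(e X).1.erase b, ⟨p, mem_erase.2 ⟨min_ne, heX.min_mem⟩⟩⟩
  have hY : HasExtrema p q (e.symm Y) := he.symm.hasExtrema_map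
    ⟨mem_erase.2 ⟨min_ne, heX.min_mem⟩, mem_erase.2 ⟨max_ne, heX.max_mem⟩,
      fun x hx => heX.min_le x (mem_of_mem_erase hx),
      fun x hx => heX.le_max x (mem_of_mem_erase hx)⟩
  have le_Y : X ≤ e.symm Y := fun a ha => by
    rw [← hY.triple_le_iff, ← he.map_le_map_iff (hT ha) hY, e.apply_symm_apply]
    have map_triple_le : e (triple p a q) ≤ e X :=
      (he.map_le_map_iff (hT ha) hX).2 (hX.triple_le_iff.2 ha)
    exact subset_erase.2 ⟨map_triple_le, hnot a ha⟩
  rw [← he.map_le_map_iff hX hY, e.apply_symm_apply] at le_Y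
  exact notMem_erase b _ (le_Y hb)

theorem exists_map_triple (he : PreservesExtrema e) (hpa : p ≤ a) (haq : a ≤ q) :
    ∃ b, p ≤ b ∧ b ≤ q ∧ e (triple p a q) = triple p b q := by
  have hT := he.hasExtrema_map (hasExtrema_triple hpa haq)
  have ha : a ∈ (e.symm (e (triple p a q))).1 := by
    rw [e.symm_apply_apply]
    exact mem_triple.2 (by simp)
  obtain ⟨b, hb, hab⟩ := he.symm.exists_mem_map_triple hT ha
  have hpb := hT.min_le b hb
  have hbq := hT.le_max b hb
  have hTb := hasExtrema_triple hpb hbq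
  refine ⟨b, hpb, hbq, le_antisymm ?_ (hT.triple_le_iff.2 hb)⟩
  rw [← he.symm.map_le_map_iff hT hTb, e.symm_apply_apply]
  exact (he.symm.hasExtrema_map hTb).triple_le_iff.2 hab

theorem mem_map_iff_of_map_triple (he : PreservesExtrema e) (hX : HasExtrema p q X)
    (hpa : p ≤ a) (haq : a ≤ q) (h : e (triple p a q) = triple p b q) :
    b ∈ (e X).1 ↔ a ∈ X.1 := by
  rw [← hX.triple_le_iff, ← (he.hasExtrema_map hX).triple_le_iff, ← h,
    he.map_le_map_iff (hasExtrema_triple hpa haq) hX]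

theorem map_triple (he : PreservesExtrema e) (hpa : p ≤ a) (haq : a ≤ q) :
    e (triple p a q) = triple p a q ∨ e (triple p a q) = triple p (p + q - a) q := by
  obtain ⟨b, hpb, hbq, hb⟩ := he.exists_map_triple hpa haq
  have same_gaps (m : ℕ) : (b - p ≤ m + 1 ∧ q - b ≤ m + 1) ↔ a - p ≤ m + 1 ∧ q - a ≤ m + 1 := by
    rw [← ordConnected_triple_add_interval_iff hpb hbq,
      ← ordConnected_triple_add_interval_iff hpa haq, ← hb, he.ordConnected_map_add_interval_iff]
  have h_a := same_gaps (max (a - p) (q - a) - 1).toNat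
  have h_b := same_gaps (max (b - p) (q - b) - 1).toNat
  rw [hb]
  rcases (by omega : b = a ∨ b = p + q - a) with rfl | rfl
  exacts [Or.inl rfl, Or.inr rfl]

/-- If `{p, a, q}` were reflected, then `{p, p + 1, a, q}`, whose longest gap is that from `a` to
`q`, would be mapped to a set containing `p`, `p + 1`, `p + q - a`, `q`, all of whose gaps are
shorter. -/
theorem map_triple_of_two_mul_lt (he : PreservesExtrema e)
    (hsucc : e (triple p (p + 1) q) = triple p (p + 1) q) (hpa : p + 1 < a)
    (haq : 2 * a < p + q) : e (triple p a q) = triple p a q := by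
  refine (he.map_triple (by omega) (by omega)).resolve_right fun hrefl => ?_
  let Q : NFin := ⟨{p, p + 1, a, q}, insert_nonempty _ _⟩
  have mem_Q {z : ℤ} : z ∈ Q.1 ↔ z = p ∨ z = p + 1 ∨ z = a ∨ z = q := by simp [Q]
  have hQ : HasExtrema p q Q := by
    constructor <;> simp only [mem_Q, true_or, or_true] <;> omega
  have heQ := he.hasExtrema_map hQ
  have succ_mem : p + 1 ∈ (e Q).1 :=
    (he.mem_map_iff_of_map_triple hQ (by omega) (by omega) hsucc).2 (mem_Q.2 (by simp))
  have refl_mem : p + q - a ∈ (e Q).1 :=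
    (he.mem_map_iff_of_map_triple hQ (by omega) (by omega) hrefl).2 (mem_Q.2 (by simp))
  obtain ⟨m, hm⟩ := Int.eq_ofNat_of_zero_le (by omega : 0 ≤ q - a - 2)
  have small_gaps : ((e Q + interval 0 m).1 : Set ℤ).OrdConnected := by
    refine heQ.ordConnected_add_interval_iff.2 fun z hpz hzq => ?_
    rcases (by omega : z = p ∨ p < z ∧ z < p + q - a ∨ p + q - a ≤ z ∧ z < q ∨ z = q) with
      rfl | h | h | rfl
    · exact ⟨z, heQ.min_mem, by omega, by omega⟩
    · exact ⟨p + 1, succ_mem, by omega, by omega⟩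
    · exact ⟨p + q - a, refl_mem, by omega, by omega⟩
    · exact ⟨z, heQ.max_mem, by omega, by omega⟩
  rw [he.ordConnected_map_add_interval_iff, hQ.ordConnected_add_interval_iff] at small_gaps
  obtain ⟨x, hx, h₁, h₂⟩ := small_gaps (q - 1) (by omega) (by omega)
  rw [mem_Q] at hx
  omega

theorem map_triple_eq_self (he : PreservesExtrema e)
    (hsucc : e (triple p (p + 1) q) = triple p (p + 1) q) (hpa : p ≤ a) (haq : a ≤ q) :
    e (triple p a q) = triple p a q := by
  have lower_half {c : ℤ} (hpc : p ≤ c) (hc : 2 * c ≤ p + q) :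
      e (triple p c q) = triple p c q := by
    rcases (by omega : c = p ∨ c = p + 1 ∨ 2 * c = p + q ∨ p + 1 < c ∧ 2 * c < p + q) with
      rfl | rfl | hmid | ⟨hpc, hc⟩
    · refine (he.map_triple hpc (by omega : c ≤ q)).elim id fun hrefl => hrefl.trans ?_
      exact ext_mem fun z => by simp [mem_triple]
    · exact hsucc
    · simpa only [← hmid, two_mul, add_sub_cancel_right, or_self] using
        he.map_triple hpc (by omega : c ≤ q)
    · exact he.map_triple_of_two_mul_lt hsucc hpc hc
  rcases le_or_gt (2 * a) (p + q) with ha | ha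
  · exact lower_half hpa ha
  refine (he.map_triple hpa haq).elim id fun hrefl => ?_
  rw [hrefl]
  exact (e.injective (hrefl.trans (lower_half (by omega) (by omega)).symm)).symm

theorem map_eq_self_of_map_triple_succ (he : PreservesExtrema e) (hX : HasExtrema p q X)
    (hsucc : e (triple p (p + 1) q) = triple p (p + 1) q) : e X = X := by
  have mem_iff {z : ℤ} (h₁ : p ≤ z) (h₂ : z ≤ q) : z ∈ (e X).1 ↔ z ∈ X.1 :=
    he.mem_map_iff_of_map_triple hX h₁ h₂ (he.map_triple_eq_self hsucc h₁ h₂)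
  have heX := he.hasExtrema_map hX
  exact ext_mem fun z => ⟨fun hz => (mem_iff (heX.min_le z hz) (heX.le_max z hz)).1 hz,
    fun hz => (mem_iff (hX.min_le z hz) (hX.le_max z hz)).2 hz⟩

theorem map_triple_succ_of_map_ne (he : PreservesExtrema e) (hX : HasExtrema p q X)
    (hne : e X ≠ X) : p + 3 ≤ q ∧ e (triple p (p + 1) q) = triple p (q - 1) q := by
  have hsucc := mt (he.map_eq_self_of_map_triple_succ hX) hne
  have hpq := mt (he.map_eq_self_of_le_add_one hX) hne
  have hrefl := (he.map_triple (by omega) (by omega)).resolve_left hsucc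
  rw [show p + q - (p + 1) = q - 1 by ring] at hrefl
  refine ⟨?_, hrefl⟩
  by_contra! hlt
  exact hsucc (by rw [hrefl, show q - 1 = p + 1 by omega])

theorem map_triple_succ_of_map_ne_reflection (he : PreservesExtrema e) (hX : HasExtrema p q X)
    (hne : e X ≠ reflection X) : p + 3 ≤ q ∧ e (triple p (p + 1) q) = triple p (p + 1) q := by
  obtain ⟨hpq, h⟩ := he.trans_reflection.map_triple_succ_of_map_ne hX fun h =>
    hne (by rw [← reflection_reflection (e X)]; exact congrArg reflection h)
  refine ⟨hpq, ?_⟩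
  have hrefl := congrArg reflection h
  rwa [AddEquiv.trans_apply, reflection_reflection, reflection_triple (by omega) (by omega),
    show p + q - (q - 1) = p + 1 by ring] at hrefl

theorem map_eq_self_or_reflection (he : PreservesExtrema e) (X : NFin) :
    e X = X ∨ e X = reflection X := by
  by_contra! hX
  obtain ⟨hpq, hrefl⟩ := he.map_triple_succ_of_map_ne (hasExtrema_minz_maxz X) hX.1
  obtain ⟨-, hself⟩ := he.map_triple_succ_of_map_ne_reflection (hasExtrema_minz_maxz X) hX.2
  have hmem : maxz X - 1 ∈ (triple (minz X) (minz X + 1) (maxz X)).1 := by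
    rw [← hself, hrefl]
    exact mem_triple.2 (by simp)
  rw [mem_triple] at hmem
  omega

/-- If `e` fixed one set and reflected another, it would map some `{p, p + 1, q}` to
`{p, q - 1, q}` and fix some `{p', p' + 1, q'}`. The sum of the images contains both `min + 1` and
`max - 1`, but the sum of the two triples does not contain `max - 1`. -/
theorem eq_refl_or_eq_reflection (he : PreservesExtrema e) :
    e = AddEquiv.refl NFin ∨ e = reflection := by
  by_contra! hne
  obtain ⟨A, hA⟩ := DFunLike.exists_ne hne.1
  obtain ⟨C, hC⟩ := DFunLike.exists_ne hne.2
  obtain ⟨hA_diam, hA_map⟩ := he.map_triple_succ_of_map_ne (hasExtrema_minz_maxz A) hA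
  obtain ⟨hC_diam, hC_map⟩ := he.map_triple_succ_of_map_ne_reflection (hasExtrema_minz_maxz C) hC
  set p := minz A
  set q := maxz A
  set p' := minz C
  set q' := maxz C
  set S := triple p (p + 1) q + triple p' (p' + 1) q'
  have hS : HasExtrema (p + p') (q + q') S :=
    (hasExtrema_triple (by omega) (by omega)).add (hasExtrema_triple (by omega) (by omega))
  have map_S : e S = triple p (q - 1) q + triple p' (p' + 1) q' := by rw [map_add, hA_map, hC_map]
  have succ_min_mem : p + p' + 1 ∈ (e S).1 := by
    rw [map_S]
    exact mem_add.2 ⟨p, mem_triple.2 (by simp), p' + 1, mem_triple.2 (by simp), by ring⟩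
  have pred_max_mem : q + q' - 1 ∈ (e S).1 := by
    rw [map_S]
    exact mem_add.2 ⟨q - 1, mem_triple.2 (by simp), q', mem_triple.2 (by simp), by ring⟩
  have pred_max_mem_S : q + q' - 1 ∈ S.1 := by
    rcases he.map_eq_self_or_reflection S with h | h
    · rwa [h] at pred_max_mem
    · rw [h, mem_reflection, hS.minz_eq, hS.maxz_eq] at succ_min_mem
      rwa [show q + q' - 1 = p + p' + (q + q') - (p + p' + 1) by ring]
  obtain ⟨x, hx, y, hy, hxy⟩ := mem_add.1 pred_max_mem_S
  rw [mem_triple] at hx hy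
  omega

end PreservesExtrema

/-! ### Reduction to automorphisms preserving minima and maxima -/

theorem eq_singletonHom_of_diamHom_eq_zero {X : NFin} (h : diamHom X = 0) :
    X = singletonHom (minz X) := by
  have hX := hasExtrema_minz_maxz X
  have hpq : maxz X = minz X := sub_eq_zero.1 h
  rw [← interval_zero_right, eq_interval_of_ordConnected (hX.ordConnected_of_le_add_one (by omega)),
    h, (hasExtrema_interval _ _).minz_eq, Int.toNat_zero]

theorem diamHom_interval (a : ℤ) (n : ℕ) : diamHom (interval a n) = n := by
  have h := hasExtrema_interval a n
  rw [diamHom_apply, h.minz_eq, h.maxz_eq, add_sub_cancel_left]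

theorem diamHom_map_singletonHom (f : NFin →+ NFin) (c : ℤ) : diamHom (f (singletonHom c)) = 0 := by
  have hsum : diamHom (f (singletonHom c)) + diamHom (f (singletonHom (-c))) = 0 := by
    rw [← map_add, ← map_add, ← map_add, add_neg_cancel, map_zero, map_zero, map_zero]
  have hc := diamHom_nonneg (f (singletonHom c))
  have hneg := diamHom_nonneg (f (singletonHom (-c)))
  omega

/-- The diameters of the images are multiples of the diameter of the image of `{0, 1}`, and by
surjectivity the diameter `1` occurs among them. -/
theorem diamHom_map (e : NFin ≃+ NFin) (X : NFin) : diamHom (e X) = diamHom X := by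
  set k := diamHom (e (interval 0 1))
  have map_eq_mul : diamHom.comp e.toAddMonoidHom = (AddMonoidHom.mulRight k).comp diamHom := by
    apply addMonoidHom_ext
    · exact (diamHom_map_singletonHom e.toAddMonoidHom 1).trans (by simp [diamHom_singletonHom])
    · exact (by simp [diamHom_interval] : k = diamHom (interval 0 1) * k)
  have map_eq_mul_apply (Y : NFin) : diamHom (e Y) = diamHom Y * k :=
    DFunLike.congr_fun map_eq_mul Y
  obtain ⟨Y, hY⟩ := e.surjective (interval 0 1)
  have mul_k : diamHom Y * k = 1 := by rw [← map_eq_mul_apply, hY, diamHom_interval, Nat.cast_one]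
  have k_eq_one : k = 1 := Int.eq_one_of_mul_eq_one_left (diamHom_nonneg _) mul_k
  rw [map_eq_mul_apply, k_eq_one, mul_one]

theorem map_singletonHom (e : NFin ≃+ NFin) (c : ℤ) :
    e (singletonHom c) = singletonHom (c * minz (e (singletonHom 1))) := by
  have hone := eq_singletonHom_of_diamHom_eq_zero (diamHom_map_singletonHom e.toAddMonoidHom 1)
  have hcomp : e.toAddMonoidHom.comp singletonHom =
      singletonHom.comp (AddMonoidHom.mulRight (minz (e (singletonHom 1)))) :=
    AddMonoidHom.ext_int (hone.trans (by simp))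
  exact DFunLike.congr_fun hcomp c

theorem map_singletonHom_one (e : NFin ≃+ NFin) :
    e (singletonHom 1) = singletonHom 1 ∨ e (singletonHom 1) = singletonHom (-1) := by
  have hsymm : singletonHom (minz (e.symm (singletonHom 1))) = e.symm (singletonHom 1) :=
    (eq_singletonHom_of_diamHom_eq_zero (diamHom_map_singletonHom e.symm.toAddMonoidHom 1)).symm
  have hunit : minz (e.symm (singletonHom 1)) * minz (e (singletonHom 1)) = 1 := by
    rw [← minz_singletonHom (_ * _), ← map_singletonHom, hsymm, e.apply_symm_apply,
      minz_singletonHom]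
  rw [map_singletonHom, one_mul]
  exact (Int.isUnit_iff.1 (IsUnit.of_mul_eq_one_right _ hunit)).imp (congrArg _) (congrArg _)

theorem preservesExtrema_of_map_singletonHom_one {e : NFin ≃+ NFin}
    (hsingleton : e (singletonHom 1) = singletonHom 1) (hinterval : minz (e (interval 0 1)) = 0) :
    PreservesExtrema e := by
  have minz_comp : minzHom.comp e.toAddMonoidHom = minzHom :=
    addMonoidHom_ext (congrArg minz hsingleton)
      (hinterval.trans (hasExtrema_interval 0 1).minz_eq.symm)
  have minz_map (X : NFin) : minz (e X) = minz X := DFunLike.congr_fun minz_comp X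
  refine ⟨minz_map, fun X => ?_⟩
  have hdiam := diamHom_map e X
  rw [diamHom_apply, diamHom_apply, minz_map] at hdiam
  exact sub_left_injective hdiam

theorem eq_fa_or_eq_negF_comp_ga {e : NFin ≃+ NFin} (h : e (singletonHom 1) = singletonHom 1) :
    ∃ α, ⇑e = fa α ∨ ⇑e = negF ∘ ga α := by
  set β := minz (e (interval 0 1))
  have maxz_map : maxz (e (interval 0 1)) = β + 1 := by
    have hdiam := diamHom_map e (interval 0 1)
    rw [diamHom_interval, diamHom_apply] at hdiam
    omega
  have he : PreservesExtrema (e.trans (faEquiv β)) := by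
    apply preservesExtrema_of_map_singletonHom_one
    · rw [AddEquiv.trans_apply, h, faEquiv_apply, fa_singletonHom]
    · rw [AddEquiv.trans_apply, faEquiv_apply, fa, minz_tr, maxz_map]
      ring
  have e_eq (X : NFin) : e X = fa (-β) (e.trans (faEquiv β) X) := (fa_neg_fa β (e X)).symm
  rcases he.eq_refl_or_eq_reflection with h | h
  · exact ⟨-β, Or.inl (funext fun X => by rw [e_eq, h, AddEquiv.refl_apply])⟩
  · refine ⟨β, Or.inr (funext fun X => ?_)⟩
    rw [e_eq, h, reflection_apply, fa_negF_ga, sub_neg_eq_add, zero_add, Function.comp_apply]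

theorem exists_coe_eq_fa_or_ga_or_negF_comp (e : NFin ≃+ NFin) :
    ∃ α, ⇑e = fa α ∨ ⇑e = ga α ∨ ⇑e = negF ∘ fa α ∨ ⇑e = negF ∘ ga α := by
  rcases map_singletonHom_one e with h | h
  · obtain ⟨α, hα | hα⟩ := eq_fa_or_eq_negF_comp_ga h
    exacts [⟨α, by simp [hα]⟩, ⟨α, by simp [hα]⟩]
  · have hneg : (e.trans negEquiv) (singletonHom 1) = singletonHom 1 := by
      rw [AddEquiv.trans_apply, h]
      rfl
    have e_eq : ⇑e = negF ∘ e.trans negEquiv := funext fun X => (negF_involutive (e X)).symm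
    obtain ⟨α, hα | hα⟩ := eq_fa_or_eq_negF_comp_ga hneg
    · exact ⟨α, Or.inr (Or.inr (Or.inl (e_eq.trans (congrArg _ hα))))⟩
    · refine ⟨α, Or.inr (Or.inl ?_)⟩
      rw [e_eq, hα, ← Function.comp_assoc, negF_involutive.comp_self, Function.id_comp]

end NFin

/-- Every automorphism of `P_fin(ℤ)` is of the form `±f_α` or `±g_α` for some `α ∈ ℤ`,
and conversely every such map is an automorphism. -/
theorem stmt_0 (φ : NFin → NFin) :
    (Function.Bijective φ ∧ ∀ X Y : NFin, φ (X + Y) = φ X + φ Y) ↔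
      ∃ α : ℤ, φ = fa α ∨ φ = ga α ∨ φ = negF ∘ fa α ∨ φ = negF ∘ ga α := by
  open NFin in
  constructor
  · rintro ⟨hbij, hadd⟩
    exact exists_coe_eq_fa_or_ga_or_negF_comp (AddEquiv.mk (Equiv.ofBijective φ hbij) hadd)
  · have isAutomorphism (e : NFin ≃+ NFin) :
        Function.Bijective e ∧ ∀ X Y : NFin, e (X + Y) = e X + e Y := ⟨e.bijective, map_add e⟩
    rintro ⟨α, rfl | rfl | rfl | rfl⟩
    exacts [isAutomorphism (faEquiv α), isAutomorphism (gaEquiv α),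
      isAutomorphism ((faEquiv α).trans negEquiv), isAutomorphism ((gaEquiv α).trans negEquiv)]
end

section
/- If f is a monoid homomorphism from P_fin(ℤ) to the additive group of integers, then there exist integers a and b such that f(X) = a·min X + b·max X for every nonempty finite subset X of ℤ. -/
open Finset Pointwise

/-! Adding `X` to the interval `[min X, max X]` fills in all the gaps of `X`, so
`X + [min X, max X] = [min X, max X] + [min X, max X]`. Cancelling in the target, a homomorphism
takes the same value on `X` and on `[min X, max X]`. Since intervals form a copy of the monoid
`ℤ × ℕ` of pairs (left endpoint, length), the values on `{1}` and `{0, 1}` determine everything. -/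

/-- The integer interval `[m, m + n]`. Recording the length `n : ℕ` in place of the right endpoint
keeps the set nonempty and makes the interval additive in `(m, n)`. -/
noncomputable def interval (m : ℤ) (n : ℕ) : NFin := ⟨Icc m (m + n), nonempty_Icc.2 (by lia)⟩

theorem minz_le_maxz (X : NFin) : minz X ≤ maxz X :=
  X.1.min'_le_max' X.2

theorem add_interval_of_le_succ {X : NFin} {n k : ℕ} (hX : minz X + n = maxz X) (hnk : n ≤ k + 1)
    (p : ℤ) : X + interval p k = interval (minz X + p) (n + k) := by
  apply Subtype.ext
  change X.1 + Icc p (p + k) = Icc (minz X + p) (minz X + p + (n + k : ℕ))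
  ext x
  simp only [mem_add, mem_Icc]
  constructor
  · rintro ⟨y, hy, z, hz, rfl⟩
    have hmin : minz X ≤ y := X.1.min'_le y hy
    have hmax : y ≤ maxz X := X.1.le_max' y hy
    lia
  · intro hx
    rcases le_or_gt x (minz X + (p + k)) with hle | hgt
    · exact ⟨minz X, X.1.min'_mem X.2, x - minz X, by lia, by lia⟩
    · exact ⟨maxz X, X.1.max'_mem X.2, x - maxz X, by lia, by lia⟩

theorem interval_add_interval (m p : ℤ) (n k : ℕ) :
    interval m n + interval p k = interval (m + p) (n + k) := by
  apply Subtype.ext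
  change Icc m (m + n) + Icc p (p + k) = Icc (m + p) (m + p + (n + k : ℕ))
  rw [← coe_inj, coe_add, coe_Icc, coe_Icc, Set.Icc_add_Icc (by lia) (by lia), coe_Icc,
    Nat.cast_add, add_add_add_comm]

theorem map_eq_map_interval {A : Type*} [Add A] [IsRightCancelAdd A] (f : NFin →ₙ+ A)
    {X : NFin} {n : ℕ} (hX : minz X + n = maxz X) : f X = f (interval (minz X) n) := by
  have habsorb : X + interval 0 n = interval (minz X) n + interval 0 n := by
    rw [add_interval_of_le_succ hX n.le_succ, interval_add_interval]
  apply add_right_cancel (b := f (interval 0 n))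
  rw [← map_add, habsorb, map_add]

theorem map_interval {A : Type*} [AddGroup A] (f : NFin →ₙ+ A) (m : ℤ) (n : ℕ) :
    f (interval m n) = m • f (interval 1 0) + n • f (interval 0 1) := by
  let onPoints : ℤ →+ A := .mk' (fun m => f (interval m 0)) fun m p => by
    rw [← map_add, interval_add_interval]
  let onInitial : ℕ →+ A := .mk' (fun n => f (interval 0 n)) fun n k => by
    rw [← map_add, interval_add_interval, add_zero]
  have hpoints : f (interval m 0) = m • f (interval 1 0) := by
    simpa [onPoints] using map_zsmul onPoints m 1
  have hinitial : f (interval 0 n) = n • f (interval 0 1) := by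
    simpa [onInitial] using map_nsmul onInitial n 1
  rw [← hpoints, ← hinitial, ← map_add, interval_add_interval, add_zero, zero_add]

theorem stmt_2_general {A : Type*} [AddCommGroup A] (f : NFin →ₙ+ A) :
    ∃ a b : A, ∀ X : NFin, f X = minz X • a + maxz X • b := by
  refine ⟨f (interval 1 0) - f (interval 0 1), f (interval 0 1), fun X => ?_⟩
  obtain ⟨n, hn⟩ := Int.le.dest (minz_le_maxz X)
  rw [map_eq_map_interval f hn, map_interval, ← hn]
  module

/-- Every homomorphism from `P_fin(ℤ)` to `(ℤ,+)` is of the form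
`X ↦ a·min X + b·max X` for some integers `a, b`. -/
theorem stmt_2 (f : NFin → ℤ) (hf : ∀ X Y : NFin, f (X + Y) = f X + f Y) :
    ∃ a b : ℤ, ∀ X : NFin, f X = a * minz X + b * maxz X := by
  simpa [mul_comm] using stmt_2_general ⟨f, hf⟩
end

section
/- For every integer α, the map f_α defined by f_α(X) := X + α·min X − α·max X is an automorphism of the monoid P_fin(ℤ): it is a bijective map on nonempty finite subsets of ℤ satisfying f_α(X + Y) = f_α(X) + f_α(Y), with inverse f_{−α}. -/
open Finset Pointwise

/-!
Both `min` and `max` are additive on `P_fin(ℤ)`, so `δ X = α (min X - max X)` is an additive map to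
`ℤ`, and it vanishes on singletons. Hence `f_α` is the shear `X ↦ X + {δ X}`, whose added term is
invisible to `δ`: applying the shear along `-δ` adds `{-δ X}` and returns `X`.
-/

section Shear

variable {M N : Type*} [AddCommMonoid M]

/-- The shear `x ↦ x + ι (δ x)` of a commutative monoid, which translates each element by an amount
`δ x` taken from a second monoid through `ι`. -/
def shear [AddCommMonoid N] (ι : N →+ M) (δ : M →+ N) : M →+ M :=
  AddMonoidHom.id M + ι.comp δ

theorem shear_apply [AddCommMonoid N] (ι : N →+ M) (δ : M →+ N) (x : M) :
    shear ι δ x = x + ι (δ x) :=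
  rfl

theorem shear_zero [AddCommMonoid N] (ι : N →+ M) : shear ι 0 = AddMonoidHom.id M := by
  ext x
  simp [shear_apply]

theorem shear_comp_shear [AddCommMonoid N] {ι : N →+ M} {δ : M →+ N} (hδ : δ.comp ι = 0)
    (ε : M →+ N) : (shear ι δ).comp (shear ι ε) = shear ι (ε + δ) := by
  ext x
  have δ_shear : δ (x + ι (ε x)) = δ x := by
    rw [map_add, ← AddMonoidHom.comp_apply δ ι, hδ, AddMonoidHom.zero_apply, add_zero]
  rw [AddMonoidHom.comp_apply, shear_apply ι ε, shear_apply, δ_shear, shear_apply,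
    AddMonoidHom.add_apply, map_add, add_assoc]

/-- The automorphism given by the shear along a map `δ` that vanishes on the image of `ι`; its
inverse is the shear along `-δ`. -/
def shearEquiv [AddCommGroup N] (ι : N →+ M) (δ : M →+ N) (hδ : δ.comp ι = 0) : M ≃+ M :=
  AddMonoidHom.toAddEquiv (shear ι δ) (shear ι (-δ))
    (by rw [shear_comp_shear (by rw [AddMonoidHom.neg_comp, hδ, neg_zero]), add_neg_cancel,
      shear_zero])
    (by rw [shear_comp_shear hδ, neg_add_cancel, shear_zero])

end Shear

section MinMax

variable {G : Type*} [Add G] [LinearOrder G] [AddLeftMono G] [AddRightMono G]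

theorem min'_add {s t : Finset G} (hs : s.Nonempty) (ht : t.Nonempty) :
    (s + t).min' (hs.add ht) = s.min' hs + t.min' ht := by
  refine (isLeast_min' _ _).unique ?_
  rw [coe_add, ← Set.image2_add]
  exact (isLeast_min' s hs).image2 (fun _ ↦ add_left_mono) (fun _ ↦ add_right_mono)
    (isLeast_min' t ht)

theorem max'_add {s t : Finset G} (hs : s.Nonempty) (ht : t.Nonempty) :
    (s + t).max' (hs.add ht) = s.max' hs + t.max' ht := by
  refine (isGreatest_max' _ _).unique ?_
  rw [coe_add, ← Set.image2_add]
  exact (isGreatest_max' s hs).image2 (fun _ ↦ add_left_mono) (fun _ ↦ add_right_mono)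
    (isGreatest_max' t ht)

end MinMax

/-- The monoid `P_fin(G)` of nonempty finite subsets of `G` under sumset. -/
def nonemptyFinsets (G : Type*) [AddMonoid G] [DecidableEq G] : AddSubmonoid (Finset G) where
  carrier := {s | s.Nonempty}
  zero_mem' := zero_nonempty
  add_mem' := Finset.Nonempty.add

namespace nonemptyFinsets

/-- The embedding `g ↦ {g}` of `G` into `P_fin(G)`. -/
def singletonHom (G : Type*) [AddMonoid G] [DecidableEq G] : G →+ nonemptyFinsets G :=
  singletonAddMonoidHom.codRestrict (nonemptyFinsets G) singleton_nonempty

section Monoid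

variable (G : Type*) [AddMonoid G] [LinearOrder G] [AddLeftMono G] [AddRightMono G]

/-- The minimum, as an additive map on `P_fin(G)`. -/
def minHom : nonemptyFinsets G →+ G where
  toFun X := X.1.min' X.2
  map_zero' := min'_singleton 0
  map_add' X Y := min'_add X.2 Y.2

/-- The maximum, as an additive map on `P_fin(G)`. -/
def maxHom : nonemptyFinsets G →+ G where
  toFun X := X.1.max' X.2
  map_zero' := max'_singleton 0
  map_add' X Y := max'_add X.2 Y.2

end Monoid

variable {G : Type*} [AddCommGroup G] [LinearOrder G] [IsOrderedAddMonoid G]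

theorem minHom_sub_maxHom_comp_singletonHom :
    (minHom G - maxHom G).comp (singletonHom G) = 0 := by
  ext g
  exact sub_eq_zero.2 ((min'_singleton g).trans (max'_singleton g).symm)

/-- The map `X ↦ X + φ (min X - max X)` on `P_fin(G)`, where the translation is written as the sum
with a singleton. It generalizes `f_α`, which is the case of multiplication by `α` on `ℤ`. -/
def minMaxShift (φ : G →+ G) (X : nonemptyFinsets G) : nonemptyFinsets G :=
  X + singletonHom G (φ (minHom G X - maxHom G X))

/-- The map `minMaxShift φ` as an automorphism of `P_fin(G)`. -/
def minMaxShiftEquiv (φ : G →+ G) : nonemptyFinsets G ≃+ nonemptyFinsets G :=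
  shearEquiv (singletonHom G) (φ.comp (minHom G - maxHom G)) <| by
    rw [AddMonoidHom.comp_assoc, minHom_sub_maxHom_comp_singletonHom, AddMonoidHom.comp_zero]

theorem coe_minMaxShiftEquiv (φ : G →+ G) : ⇑(minMaxShiftEquiv φ) = minMaxShift φ :=
  rfl

theorem coe_minMaxShiftEquiv_symm (φ : G →+ G) :
    ⇑(minMaxShiftEquiv φ).symm = minMaxShift (-φ) :=
  rfl

end nonemptyFinsets

open nonemptyFinsets in
theorem stmt_12_general {G : Type*} [AddCommGroup G] [LinearOrder G] [IsOrderedAddMonoid G]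
    (φ : G →+ G) :
    (∀ X Y, minMaxShift φ (X + Y) = minMaxShift φ X + minMaxShift φ Y) ∧
    Function.Bijective (minMaxShift φ) ∧
    minMaxShift (-φ) ∘ minMaxShift φ = id ∧ minMaxShift φ ∘ minMaxShift (-φ) = id := by
  rw [← coe_minMaxShiftEquiv_symm, ← coe_minMaxShiftEquiv]
  exact ⟨map_add _, (minMaxShiftEquiv φ).bijective, (minMaxShiftEquiv φ).symm_comp_self,
    (minMaxShiftEquiv φ).self_comp_symm⟩

-- The equation typechecks because `NFin` and `nonemptyFinsets ℤ` are definitionally equal.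
open nonemptyFinsets in
theorem fa_eq_minMaxShift (α : ℤ) : fa α = minMaxShift (AddMonoidHom.mul α) := by
  funext X
  have shift_eq : α * minz X - α * maxz X = α * (minz X - maxz X) := (mul_sub ..).symm
  refine Subtype.ext ?_
  rw [fa, shift_eq]
  exact (add_singleton _).symm

/-- Each `f_α` is an automorphism of `P_fin(ℤ)`, with inverse `f_{−α}`. -/
theorem stmt_12 (α : ℤ) :
    (∀ X Y : NFin, fa α (X + Y) = fa α X + fa α Y) ∧
    Function.Bijective (fa α) ∧
    fa (-α) ∘ fa α = id ∧ fa α ∘ fa (-α) = id := by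
  rw [fa_eq_minMaxShift, fa_eq_minMaxShift, map_neg]
  exact stmt_12_general (AddMonoidHom.mul α)
end

section
/- For every integer α, the conjugation identity g_0 ∘ f_α ∘ g_0 = f_{−α} holds, where f_α(X) := X + α·min X − α·max X and g_0(X) := X − min X − max X for nonempty finite X ⊆ ℤ. More generally, for every φ in the set {f_β : β ∈ ℤ} one has φ ∘ f_α ∘ φ⁻¹ = f_α, and for every φ in {g_β : β ∈ ℤ} one has φ ∘ f_α ∘ φ⁻¹ = f_{−α}, where g_β(X) := X + (β−1)·min X − (β+1)·max X. -/
open Finset Pointwise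

/-! Translating `X` by `c` moves `min X` and `max X` by `c` and keeps `max X - min X`. Hence the
maps `f_α` and `g_β` compose like the rotations and reflections of the infinite dihedral group, and
conjugating a rotation by a rotation fixes it, while conjugating it by a reflection inverts it. -/

theorem minz_tr (X : NFin) (c : ℤ) : minz (tr X c) = minz X + c :=
  min'_image add_left_mono X.1 (tr X c).2

theorem maxz_tr (X : NFin) (c : ℤ) : maxz (tr X c) = maxz X + c :=
  max'_image add_left_mono X.1 (tr X c).2

theorem tr_tr (X : NFin) (c d : ℤ) : tr (tr X c) d = tr X (c + d) := by
  simp only [tr, image_image, Function.comp_def, add_assoc]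

theorem fa_comp_fa (α β : ℤ) : fa α ∘ fa β = fa (α + β) := by
  funext X
  simp only [Function.comp_apply, fa, minz_tr, maxz_tr, tr_tr]
  congr 1
  ring

theorem fa_comp_ga (α β : ℤ) : fa α ∘ ga β = ga (α + β) := by
  funext X
  simp only [Function.comp_apply, fa, ga, minz_tr, maxz_tr, tr_tr]
  congr 1
  ring

theorem ga_comp_ga (α β : ℤ) : ga α ∘ ga β = fa (α - β) := by
  funext X
  simp only [Function.comp_apply, fa, ga, minz_tr, maxz_tr, tr_tr]
  congr 1
  ring

theorem fa_comp_fa_comp_fa_neg (α β : ℤ) : fa β ∘ fa α ∘ fa (-β) = fa α := by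
  rw [fa_comp_fa, fa_comp_fa, add_comm α, add_neg_cancel_left]

theorem ga_comp_fa_comp_ga (α β : ℤ) : ga β ∘ fa α ∘ ga β = fa (-α) := by
  rw [fa_comp_ga, ga_comp_ga, sub_add_cancel_right]

/-- Conjugation identities: `g_0 ∘ f_α ∘ g_0 = f_{−α}`; more generally
`f_β ∘ f_α ∘ f_β⁻¹ = f_α` and `g_β ∘ f_α ∘ g_β⁻¹ = f_{−α}`
(recall `f_β⁻¹ = f_{−β}` and `g_β⁻¹ = g_β`). -/
theorem stmt_14 (α : ℤ) :
    ga 0 ∘ fa α ∘ ga 0 = fa (-α) ∧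
    (∀ β : ℤ, fa β ∘ fa α ∘ fa (-β) = fa α) ∧
    (∀ β : ℤ, ga β ∘ fa α ∘ ga β = fa (-α)) :=
  ⟨ga_comp_fa_comp_ga α 0, fa_comp_fa_comp_fa_neg α, ga_comp_fa_comp_ga α⟩
end

section
/- Let X be a nonempty finite subset of ℤ and let m, n be non-negative integers with max X − min X ≤ m + n. Then the sumset ⟦−m, n⟧ + X equals the discrete interval ⟦−m + min X, n + max X⟧. -/
open Finset Pointwise

/-! The sumset contains the translates of the interval by `min X` and `max X`. The bound on
`max X - min X` makes these two translates overlap, so together they already cover everything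
between their extreme endpoints. -/

section IccAdd

variable {M : Type*} [AddCommMonoid M] [LinearOrder M] [IsOrderedCancelAddMonoid M]
  [ExistsAddOfLE M] {X : Set M} {a b p q : M}

theorem Icc_subset_Icc_add_of_mem (hp : p ∈ X) (hq : q ∈ X) (h : a + q ≤ b + p) :
    Set.Icc (a + p) (b + q) ⊆ Set.Icc a b + X :=
  calc
    Set.Icc (a + p) (b + q) ⊆ Set.Icc (a + p) (b + p) ∪ Set.Icc (b + p) (b + q) :=
      Set.Icc_subset_Icc_union_Icc
    _ ⊆ Set.Icc (a + p) (b + p) ∪ Set.Icc (a + q) (b + q) :=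
      Set.union_subset_union_right _ (Set.Icc_subset_Icc_left h)
    _ = Set.Icc a b + {p, q} := by
      rw [← Set.singleton_union, Set.add_union, Set.add_singleton, Set.add_singleton,
        Set.image_add_const_Icc, Set.image_add_const_Icc]
    _ ⊆ Set.Icc a b + X := Set.add_subset_add_left (Set.pair_subset hp hq)

theorem stmt_16_general (hp : IsLeast X p) (hq : IsGreatest X q) (h : a + q ≤ b + p) :
    Set.Icc a b + X = Set.Icc (a + p) (b + q) := by
  have X_subset : X ⊆ Set.Icc p q := fun _ hx ↦ ⟨hp.2 hx, hq.2 hx⟩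
  apply Set.Subset.antisymm
  · exact (Set.add_subset_add_left X_subset).trans (Set.Icc_add_Icc_subset a b p q)
  · exact Icc_subset_Icc_add_of_mem hp.1 hq.1 h

end IccAdd

/-- If `max X − min X ≤ m + n`, then `⟦−m, n⟧ + X = ⟦−m + min X, n + max X⟧`. -/
theorem stmt_16 (X : Finset ℤ) (hX : X.Nonempty) (m n : ℕ)
    (h : X.max' hX - X.min' hX ≤ (m : ℤ) + (n : ℤ)) :
    Finset.Icc (-(m : ℤ)) (n : ℤ) + X =
      Finset.Icc (-(m : ℤ) + X.min' hX) ((n : ℤ) + X.max' hX) := by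
  rw [← Finset.coe_inj, Finset.coe_add, Finset.coe_Icc, Finset.coe_Icc]
  exact stmt_16_general (X.isLeast_min' hX) (X.isGreatest_max' hX) (by linarith)
end

section
/- The set H = {f_α : α ∈ ℤ} ∪ {g_α : α ∈ ℤ} of bijections of the collection of nonempty finite subsets of ℤ is a group under composition, and it is isomorphic to the infinite dihedral group Dih_∞. Here f_α(X) := X + α·min X − α·max X and g_α(X) := X + (α−1)·min X − (α+1)·max X. -/
open Finset Pointwise

theorem tr_zero (X : NFin) : tr X 0 = X :=
  Subtype.ext <| by simp only [tr, add_zero, image_id']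

/-- The map `X ↦ X + u·min X + v·max X`, the common form of `f_α` (for `u = α`, `v = -α`) and
`g_α` (for `u = α - 1`, `v = -(α + 1)`). -/
def minMaxTr (u v : ℤ) (X : NFin) : NFin := tr X (u * minz X + v * maxz X)

theorem fa_eq_minMaxTr (α : ℤ) : fa α = minMaxTr α (-α) := by
  funext X
  rw [fa, minMaxTr, neg_mul, sub_eq_add_neg]

theorem ga_eq_minMaxTr (α : ℤ) : ga α = minMaxTr (α - 1) (-(α + 1)) := by
  funext X
  rw [ga, minMaxTr, neg_mul, sub_eq_add_neg]

theorem minMaxTr_zero_zero : minMaxTr 0 0 = id := by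
  funext X
  simp only [minMaxTr, zero_mul, add_zero, tr_zero, id_eq]

theorem minMaxTr_tr (u v : ℤ) (X : NFin) (c : ℤ) :
    minMaxTr u v (tr X c) = tr (minMaxTr u v X) ((1 + u + v) * c) := by
  simp only [minMaxTr, tr_tr, minz_tr, maxz_tr]
  congr 1
  ring

theorem minMaxTr_comp_minMaxTr (u v u' v' : ℤ) :
    minMaxTr u v ∘ minMaxTr u' v' =
      minMaxTr (u + (1 + u + v) * u') (v + (1 + u + v) * v') := by
  funext X
  calc minMaxTr u v (minMaxTr u' v' X)
      = tr (minMaxTr u v X) ((1 + u + v) * (u' * minz X + v' * maxz X)) := minMaxTr_tr ..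
    _ = minMaxTr (u + (1 + u + v) * u') (v + (1 + u + v) * v') X := by
      rw [minMaxTr, minMaxTr, tr_tr]
      congr 1
      ring

theorem minMaxTr_injective2 : Function.Injective2 minMaxTr := by
  intro u u' v v' h
  have h_shift (X : NFin) : u * minz X + v * maxz X = u' * minz X + v' * maxz X := by
    simpa only [minMaxTr, minz_tr, add_right_inj] using congrArg minz (congrFun h X)
  have h_sum : u + v = u' + v' := by
    simpa [minz, maxz] using h_shift ⟨{1}, by simp⟩
  have h_snd : v = v' := by
    simpa [minz, maxz] using h_shift ⟨{0, 1}, by simp⟩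
  exact ⟨by linarith, h_snd⟩

theorem fa_zero : fa 0 = id := by
  rw [fa_eq_minMaxTr, neg_zero, minMaxTr_zero_zero]

theorem ga_comp_fa (α β : ℤ) : ga α ∘ fa β = ga (α - β) := by
  simp only [fa_eq_minMaxTr, ga_eq_minMaxTr, minMaxTr_comp_minMaxTr]
  congr 1 <;> ring

theorem fa_injective : Function.Injective fa := fun α β h => by
  rw [fa_eq_minMaxTr, fa_eq_minMaxTr] at h
  exact (minMaxTr_injective2 h).1

theorem ga_injective : Function.Injective ga := fun α β h => by
  rw [ga_eq_minMaxTr, ga_eq_minMaxTr] at h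
  exact sub_left_injective (minMaxTr_injective2 h).1

theorem fa_ne_ga (α β : ℤ) : fa α ≠ ga β := fun h => by
  rw [fa_eq_minMaxTr, ga_eq_minMaxTr] at h
  obtain ⟨h_fst, h_snd⟩ := minMaxTr_injective2 h
  omega

/-- The action of the infinite dihedral group on nonempty finite sets of integers, with rotations
acting as the `f_α` and reflections as the `g_α`. Once `r i` acts as `f_i`, the minus sign on
reflections comes from Mathlib's convention `r i * sr j = sr (j - i)`; `ZMod 0` unfolds to `ℤ`. -/
def dihedralEnd : DihedralGroup 0 →* Function.End NFin where
  toFun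
    | .r i => fa i
    | .sr i => ga (-i : ℤ)
  map_one' := fa_zero
  map_mul' := by
    rintro (i | i) (j | j)
    · exact (fa_comp_fa i j).symm
    · exact (congrArg ga (neg_sub j i)).trans (fa_comp_ga i (-j : ℤ)).symm
    · exact (congrArg ga (neg_add' i j)).trans (ga_comp_fa (-i : ℤ) j).symm
    · exact (congrArg fa (neg_sub_neg i j).symm).trans (ga_comp_ga (-i : ℤ) (-j : ℤ)).symm

theorem dihedralEnd_injective : Function.Injective dihedralEnd := by
  rintro (i | i) (j | j) h
  · exact congrArg DihedralGroup.r (fa_injective h)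
  · exact (fa_ne_ga _ _ h).elim
  · exact (fa_ne_ga _ _ h.symm).elim
  · exact congrArg DihedralGroup.sr (neg_injective (ga_injective h))

theorem mem_range_dihedralEnd {φ : NFin → NFin} :
    φ ∈ Set.range dihedralEnd ↔ ∃ α : ℤ, φ = fa α ∨ φ = ga α := by
  constructor
  · rintro ⟨i | i, rfl⟩
    · exact ⟨i, Or.inl rfl⟩
    · exact ⟨(-i : ℤ), Or.inr rfl⟩
  · rintro ⟨α, rfl | rfl⟩
    · exact ⟨.r α, rfl⟩
    · exact ⟨.sr (-α : ℤ), congrArg ga (neg_neg α)⟩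

theorem toHomPerm_dihedralEnd_injective : Function.Injective dihedralEnd.toHomPerm :=
  fun _ _ h => dihedralEnd_injective (congrArg DFunLike.coe h)

theorem coe_range_toHomPerm_dihedralEnd :
    (dihedralEnd.toHomPerm.range : Set (Equiv.Perm NFin)) =
      {τ : Equiv.Perm NFin | ∃ α : ℤ, ⇑τ = fa α ∨ ⇑τ = ga α} := by
  ext τ
  have h_coe : τ ∈ dihedralEnd.toHomPerm.range ↔ ⇑τ ∈ Set.range dihedralEnd :=
    exists_congr fun _ => DFunLike.coe_fn_eq.symm
  exact h_coe.trans mem_range_dihedralEnd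

/-- The set `{f_α} ∪ {g_α}` is a group under composition, isomorphic to the
infinite dihedral group (realized in Mathlib as `DihedralGroup 0`). -/
theorem stmt_19 :
    ∃ H : Subgroup (Equiv.Perm NFin),
      (H : Set (Equiv.Perm NFin)) =
        {τ : Equiv.Perm NFin | ∃ α : ℤ, ⇑τ = fa α ∨ ⇑τ = ga α} ∧
      Nonempty (H ≃* DihedralGroup 0) :=
  ⟨dihedralEnd.toHomPerm.range, coe_range_toHomPerm_dihedralEnd,
    ⟨(MonoidHom.ofInjective toHomPerm_dihedralEnd_injective).symm⟩⟩
end
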